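/- Let Φ : 𝔻 → ℝ³ be a smooth conformal immersion with conformal factor λ, second fundamental form A = ((l, m), (m, n)) (i.e. l = A_11, m = A_12 = A_21, n = A_22) and mean curvature H. Then the Gauss–Codazzi equations hold in the form: e^{2λ} ∂_x H = ∂_x((l − n)/2) + ∂_y m and e^{2λ} ∂_y H = −∂_y((l − n)/2) + ∂_x m, at every point of 𝔻. -/

import Mathlib

/-!
In the moving frame `(∂_vΦ, ∂_wΦ, n)` attached to two coordinate directions `v, w`, the Codazzi
equation for a conformal immersion reads
`∂_v A(w,w) - ∂_w A(v,w) = ∂_vλ · (A(v,v) + A(w,w))`.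
The third derivatives of `Φ` cancel on the left by symmetry, leaving
`⟨∂_w∂_wΦ, ∂_v n⟩ - ⟨∂_v∂_wΦ, ∂_w n⟩`. Both products are expanded in the orthogonal frame: the
tangential components of the second derivatives are derivatives of the conformal relations
(`⟨∂_w∂_wΦ, ∂_vΦ⟩ = -e^{2λ}∂_vλ`, and so on), those of the derivatives of `n` are entries of `-A`,
and `∂n` has no normal component. This is `codazzi_direction`; the frame expansion is the Gram
determinant identity `inner_cross_inner_cross`.

Since `2 e^{2λ} H = A₁₁ + A₂₂`, differentiating `H` gives
`e^{2λ} ∂H = ∂(A₁₁ + A₂₂)/2 - ∂λ · (A₁₁ + A₂₂)`, and the two claimed identities are the Codazzi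
equation for `(v, w) = (ex, ey)` and `(v, w) = (ey, ex)`.
-/

open MeasureTheory Real
open scoped RealInnerProductSpace

noncomputable section

abbrev R2 : Type := ℝ × ℝ
abbrev R3 : Type := EuclideanSpace ℝ (Fin 3)
abbrev R5 : Type := EuclideanSpace ℝ (Fin 5)

/-- The open disk of radius `ρ` centered at the origin in `ℝ²`. -/
def disk (ρ : ℝ) : Set R2 := Metric.ball 0 ρ

/-- Partial derivative in the `x`-direction. -/
def pdx {E : Type*} [NormedAddCommGroup E] [NormedSpace ℝ E] (f : R2 → E) (p : R2) : E :=
  fderiv ℝ f p (1, 0)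

/-- Partial derivative in the `y`-direction. -/
def pdy {E : Type*} [NormedAddCommGroup E] [NormedSpace ℝ E] (f : R2 → E) (p : R2) : E :=
  fderiv ℝ f p (0, 1)

/-- The cross product in `ℝ³`. -/
def cross (u v : R3) : R3 :=
  (EuclideanSpace.equiv (Fin 3) ℝ).symm
    ![u 1 * v 2 - u 2 * v 1, u 2 * v 0 - u 0 * v 2, u 0 * v 1 - u 1 * v 0]

/-- The Gauss map `n := (∂ₓΦ × ∂_yΦ)/|∂ₓΦ × ∂_yΦ|`. -/
def gaussMap (Φ : R2 → R3) (p : R2) : R3 :=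
  ‖cross (pdx Φ p) (pdy Φ p)‖⁻¹ • cross (pdx Φ p) (pdy Φ p)

/-- The second derivative `∂_v ∂_w Φ`. -/
def d2 (Φ : R2 → R3) (v w : R2) (p : R2) : R3 :=
  fderiv ℝ (fun q => fderiv ℝ Φ q w) p v

/-- Entry of the second fundamental form `⟨∂_v ∂_w Φ, n⟩`. -/
def sff (Φ : R2 → R3) (v w : R2) (p : R2) : ℝ :=
  ⟪d2 Φ v w p, gaussMap Φ p⟫

def ex : R2 := (1, 0)
def ey : R2 := (0, 1)

/-- The mean curvature `H := e^{-2λ}(A₁₁ + A₂₂)/2`. -/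
def meanCurv (Φ : R2 → R3) (lam : R2 → ℝ) (p : R2) : ℝ :=
  Real.exp (-(2 * lam p)) * (sff Φ ex ex p + sff Φ ey ey p) / 2

/-- Entry `Å₁₁` of the tracefree second fundamental form. -/
def tf11 (Φ : R2 → R3) (lam : R2 → ℝ) (p : R2) : ℝ :=
  sff Φ ex ex p - meanCurv Φ lam p * Real.exp (2 * lam p)

/-- Entry `Å₁₂`. -/
def tf12 (Φ : R2 → R3) (_lam : R2 → ℝ) (p : R2) : ℝ := sff Φ ex ey p

/-- Entry `Å₂₁`. -/
def tf21 (Φ : R2 → R3) (_lam : R2 → ℝ) (p : R2) : ℝ := sff Φ ey ex p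

/-- Entry `Å₂₂`. -/
def tf22 (Φ : R2 → R3) (lam : R2 → ℝ) (p : R2) : ℝ :=
  sff Φ ey ey p - meanCurv Φ lam p * Real.exp (2 * lam p)

/-- `Å₁₁² + Å₁₂² + Å₂₁² + Å₂₂²`. -/
def tfNormSq (Φ : R2 → R3) (lam : R2 → ℝ) (p : R2) : ℝ :=
  tf11 Φ lam p ^ 2 + tf12 Φ lam p ^ 2 + tf21 Φ lam p ^ 2 + tf22 Φ lam p ^ 2

/-- The pointwise quantity `|Å e^{-λ}|`. -/
def ringA (Φ : R2 → R3) (lam : R2 → ℝ) (p : R2) : ℝ :=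
  Real.exp (-(lam p)) * Real.sqrt (tfNormSq Φ lam p)

/-- `Φ` is a smooth conformal immersion on `Ω` with conformal factor `lam`. -/
structure ConformalImmersion (Ω : Set R2) (Φ : R2 → R3) (lam : R2 → ℝ) : Prop where
  smooth : ContDiffOn ℝ (⊤ : ℕ∞) Φ Ω
  smooth_lam : ContDiffOn ℝ (⊤ : ℕ∞) lam Ω
  orth : ∀ p ∈ Ω, ⟪pdx Φ p, pdy Φ p⟫ = 0
  norm_x : ∀ p ∈ Ω, ‖pdx Φ p‖ = Real.exp (lam p)
  norm_y : ∀ p ∈ Ω, ‖pdy Φ p‖ = Real.exp (lam p)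

/-- The Willmore equation `ΔH + e^{-2λ}|Å|² H = 0` on `Ω`. -/
def IsWillmore (Φ : R2 → R3) (lam : R2 → ℝ) (Ω : Set R2) : Prop :=
  ∀ p ∈ Ω,
    pdx (pdx (meanCurv Φ lam)) p + pdy (pdy (meanCurv Φ lam)) p
      + Real.exp (-(2 * lam p)) * tfNormSq Φ lam p * meanCurv Φ lam p = 0

/-- Pointwise norm of the gradient of a scalar function. -/
def gradNorm (f : R2 → ℝ) (p : R2) : ℝ := Real.sqrt (pdx f p ^ 2 + pdy f p ^ 2)

/-- Pointwise squared norm of the gradient of a vector-valued function. -/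
def gradSqV {E : Type*} [NormedAddCommGroup E] [NormedSpace ℝ E] (f : R2 → E) (p : R2) : ℝ :=
  ‖pdx f p‖ ^ 2 + ‖pdy f p‖ ^ 2

/-- The `L²(Ω)` norm of a scalar function. -/
def l2norm (f : R2 → ℝ) (Ω : Set R2) : ℝ := Real.sqrt (∫ p in Ω, f p ^ 2)

/-- `‖f‖_{L^{2,∞}(Ω)} ≤ M`, i.e. `sup_{α>0} α |{|f|>α}|^{1/2} ≤ M`. -/
def wl2le (f : R2 → ℝ) (Ω : Set R2) (M : ℝ) : Prop :=
  ∀ α > (0:ℝ), α * Real.sqrt ((volume {p ∈ Ω | α < |f p|}).toReal) ≤ M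

/-- The Lorentz product on `ℝ⁵ = ℝ^{4,1}`. -/
def lorentz (v w : R5) : ℝ :=
  v 0 * w 0 + v 1 * w 1 + v 2 * w 2 + v 3 * w 3 - v 4 * w 4

/-- The conformal Gauss map `Y := H (Φ, (|Φ|²-1)/2, (|Φ|²+1)/2) + (n, ⟨n,Φ⟩, ⟨n,Φ⟩)`. -/
def confGauss (Φ : R2 → R3) (lam : R2 → ℝ) (p : R2) : R5 :=
  (EuclideanSpace.equiv (Fin 5) ℝ).symm
    ![meanCurv Φ lam p * Φ p 0 + gaussMap Φ p 0,
      meanCurv Φ lam p * Φ p 1 + gaussMap Φ p 1,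
      meanCurv Φ lam p * Φ p 2 + gaussMap Φ p 2,
      meanCurv Φ lam p * ((‖Φ p‖ ^ 2 - 1) / 2) + ⟪gaussMap Φ p, Φ p⟫,
      meanCurv Φ lam p * ((‖Φ p‖ ^ 2 + 1) / 2) + ⟪gaussMap Φ p, Φ p⟫]

/-- Elementary Möbius pieces: isometries, dilations, inversions. -/
inductive MobiusPiece : (R3 → R3) → Prop
  | isom (e : R3 ≃ᵢ R3) : MobiusPiece (fun x => e x)
  | dil (r : ℝ) (hr : 0 < r) : MobiusPiece (fun x => r • x)
  | inv (a : R3) : MobiusPiece (fun x => (‖x - a‖ ^ 2)⁻¹ • (x - a))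

/-- A Möbius transformation of `ℝ³`: a finite composition of isometries, dilations and
inversions. -/
inductive IsMobius : (R3 → R3) → Prop
  | id : IsMobius id
  | comp {f g : R3 → R3} : MobiusPiece f → IsMobius g → IsMobius (f ∘ g)


/-- The Gram determinant form of the product of two triple products
`⟨u, a × b⟩ ⟨z, a × b⟩`. -/
lemma inner_cross_inner_cross (u z a b : R3) :
    ⟪u, cross a b⟫ * ⟪z, cross a b⟫
      = ⟪u, z⟫ * (⟪a, a⟫ * ⟪b, b⟫ - ⟪a, b⟫ ^ 2)
        - ⟪u, a⟫ * (⟪z, a⟫ * ⟪b, b⟫ - ⟪a, b⟫ * ⟪z, b⟫)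
        + ⟪u, b⟫ * (⟪z, a⟫ * ⟪a, b⟫ - ⟪a, a⟫ * ⟪z, b⟫) := by
  simp only [cross, PiLp.inner_apply, Fin.sum_univ_three, RCLike.inner_apply, conj_trivial,
    PiLp.continuousLinearEquiv_symm_apply, Matrix.cons_val]
  ring

lemma inner_cross_left (a b : R3) : ⟪a, cross a b⟫ = 0 := by
  simp only [cross, PiLp.inner_apply, Fin.sum_univ_three, RCLike.inner_apply, conj_trivial,
    PiLp.continuousLinearEquiv_symm_apply, Matrix.cons_val]
  ring

lemma inner_cross_right (a b : R3) : ⟪b, cross a b⟫ = 0 := by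
  simp only [cross, PiLp.inner_apply, Fin.sum_univ_three, RCLike.inner_apply, conj_trivial,
    PiLp.continuousLinearEquiv_symm_apply, Matrix.cons_val]
  ring

lemma inner_cross_cross_self (a b : R3) :
    ⟪cross a b, cross a b⟫ = ⟪a, a⟫ * ⟪b, b⟫ - ⟪a, b⟫ ^ 2 := by
  simp only [cross, PiLp.inner_apply, Fin.sum_univ_three, RCLike.inner_apply, conj_trivial,
    PiLp.continuousLinearEquiv_symm_apply, Matrix.cons_val]
  ring

lemma contDiffOn_cross {Ω : Set R2} {f g : R2 → R3} (hf : ContDiffOn ℝ (⊤ : ℕ∞) f Ω)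
    (hg : ContDiffOn ℝ (⊤ : ℕ∞) g Ω) :
    ContDiffOn ℝ (⊤ : ℕ∞) (fun q => cross (f q) (g q)) Ω := by
  have hf' := contDiffOn_euclidean.1 hf
  have hg' := contDiffOn_euclidean.1 hg
  refine contDiffOn_euclidean.2 fun i => ?_
  fin_cases i
  · exact ((hf' 1).mul (hg' 2)).sub ((hf' 2).mul (hg' 1))
  · exact ((hf' 2).mul (hg' 0)).sub ((hf' 0).mul (hg' 2))
  · exact ((hf' 0).mul (hg' 1)).sub ((hf' 1).mul (hg' 0))

lemma contDiffOn_dir {E : Type*} [NormedAddCommGroup E] [NormedSpace ℝ E] {Ω : Set R2}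
    (hΩ : IsOpen Ω) {f : R2 → E} (hf : ContDiffOn ℝ (⊤ : ℕ∞) f Ω) (v : R2) :
    ContDiffOn ℝ (⊤ : ℕ∞) (fun q => fderiv ℝ f q v) Ω :=
  (hf.fderiv_of_isOpen hΩ (by simp)).clm_apply contDiffOn_const

lemma differentiableAt_of_contDiffOn {E : Type*} [NormedAddCommGroup E] [NormedSpace ℝ E]
    {Ω : Set R2} (hΩ : IsOpen Ω) {f : R2 → E} (hf : ContDiffOn ℝ (⊤ : ℕ∞) f Ω) {p : R2}
    (hp : p ∈ Ω) : DifferentiableAt ℝ f p :=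
  (hf.differentiableOn (by simp)).differentiableAt (hΩ.mem_nhds hp)

lemma d2_comm {Ω : Set R2} (hΩ : IsOpen Ω) {f : R2 → R3} (hf : ContDiffOn ℝ (⊤ : ℕ∞) f Ω)
    (v w : R2) {p : R2} (hp : p ∈ Ω) : d2 f v w p = d2 f w v p := by
  have hd : DifferentiableAt ℝ (fderiv ℝ f) p :=
    differentiableAt_of_contDiffOn hΩ (hf.fderiv_of_isOpen hΩ (by simp)) hp
  have hs : IsSymmSndFDerivAt ℝ f p :=
    (hf.contDiffAt (hΩ.mem_nhds hp)).isSymmSndFDerivAt (by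
      rw [minSmoothness_of_isRCLikeNormedField]; exact WithTop.coe_le_coe.2 (le_top : (2 : ℕ∞) ≤ ⊤))
  have key : ∀ a b, d2 f a b p = fderiv ℝ (fderiv ℝ f) p a b := by
    intro a b
    rw [d2, fderiv_clm_apply hd (differentiableAt_const b)]
    simp
  rw [key, key, hs v w]

/-- Differentiating a relation `⟨f, g⟩ = φ` that holds on an open set. -/
lemma inner_relation_deriv {Ω : Set R2} (hΩ : IsOpen Ω) {f g : R2 → R3} {φ : R2 → ℝ} {p : R2}
    (hp : p ∈ Ω) (hf : DifferentiableAt ℝ f p) (hg : DifferentiableAt ℝ g p)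
    (h : ∀ q ∈ Ω, ⟪f q, g q⟫ = φ q) (v : R2) :
    ⟪f p, fderiv ℝ g p v⟫ + ⟪fderiv ℝ f p v, g p⟫ = fderiv ℝ φ p v := by
  have he : (fun q => ⟪f q, g q⟫) =ᶠ[nhds p] φ :=
    Filter.eventually_of_mem (hΩ.mem_nhds hp) h
  rw [← he.fderiv_eq, fderiv_inner_apply ℝ hf hg]

lemma fderiv_exp_two_mul {lam : R2 → ℝ} {p : R2} (hl : DifferentiableAt ℝ lam p) (v : R2) :
    fderiv ℝ (fun q => Real.exp (2 * lam q)) p v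
      = 2 * Real.exp (2 * lam p) * fderiv ℝ lam p v := by
  rw [((hl.hasFDerivAt.const_mul (2 : ℝ)).exp).fderiv]
  simp
  ring

/-- The Codazzi equation in the directions `v, w`. The field `n` is any smooth unit normal such
that `(∂_vΦ, ∂_wΦ, n)` spans; `hexp` encodes spanning as the expansion of inner products in that
orthogonal frame. -/
lemma codazzi_direction {Ω : Set R2} (hΩ : IsOpen Ω) {Φ n : R2 → R3} {lam : R2 → ℝ} {v w : R2}
    (hΦ : ContDiffOn ℝ (⊤ : ℕ∞) Φ Ω) (hlam : ContDiffOn ℝ (⊤ : ℕ∞) lam Ω)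
    (hn : ContDiffOn ℝ (⊤ : ℕ∞) n Ω)
    (hvw : ∀ q ∈ Ω, ⟪fderiv ℝ Φ q v, fderiv ℝ Φ q w⟫ = 0)
    (hvv : ∀ q ∈ Ω, ⟪fderiv ℝ Φ q v, fderiv ℝ Φ q v⟫ = Real.exp (2 * lam q))
    (hww : ∀ q ∈ Ω, ⟪fderiv ℝ Φ q w, fderiv ℝ Φ q w⟫ = Real.exp (2 * lam q))
    (hvn : ∀ q ∈ Ω, ⟪fderiv ℝ Φ q v, n q⟫ = 0)
    (hwn : ∀ q ∈ Ω, ⟪fderiv ℝ Φ q w, n q⟫ = 0)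
    (hnn : ∀ q ∈ Ω, ⟪n q, n q⟫ = 1)
    (hexp : ∀ q ∈ Ω, ∀ u z : R3, Real.exp (2 * lam q) * ⟪u, z⟫
      = ⟪u, fderiv ℝ Φ q v⟫ * ⟪z, fderiv ℝ Φ q v⟫ + ⟪u, fderiv ℝ Φ q w⟫ * ⟪z, fderiv ℝ Φ q w⟫
        + Real.exp (2 * lam q) * ⟪u, n q⟫ * ⟪z, n q⟫)
    {p : R2} (hp : p ∈ Ω) :
    fderiv ℝ (fun q => ⟪d2 Φ w w q, n q⟫) p v - fderiv ℝ (fun q => ⟪d2 Φ v w q, n q⟫) p w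
      = fderiv ℝ lam p v * (⟪d2 Φ v v p, n p⟫ + ⟪d2 Φ w w p, n p⟫) := by
  have hΦv := contDiffOn_dir hΩ hΦ v
  have hΦw := contDiffOn_dir hΩ hΦ w
  have dl := differentiableAt_of_contDiffOn hΩ hlam hp
  have dn := differentiableAt_of_contDiffOn hΩ hn hp
  have da := differentiableAt_of_contDiffOn hΩ hΦv hp
  have db := differentiableAt_of_contDiffOn hΩ hΦw hp
  have dww : DifferentiableAt ℝ (d2 Φ w w) p :=
    differentiableAt_of_contDiffOn hΩ (contDiffOn_dir hΩ hΦw w) hp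
  have dvw : DifferentiableAt ℝ (d2 Φ v w) p :=
    differentiableAt_of_contDiffOn hΩ (contDiffOn_dir hΩ hΦw v) hp
  have third : fderiv ℝ (d2 Φ w w) p v = fderiv ℝ (d2 Φ v w) p w :=
    d2_comm hΩ hΦw v w hp
  have hsymm : d2 Φ w v p = d2 Φ v w p := d2_comm hΩ hΦ w v hp
  have vw_w := inner_relation_deriv hΩ hp da db hvw w
  have vv_w := inner_relation_deriv hΩ hp da da hvv w
  have ww_v := inner_relation_deriv hΩ hp db db hww v
  have ww_w := inner_relation_deriv hΩ hp db db hww w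
  have vn_v := inner_relation_deriv hΩ hp da dn hvn v
  have vn_w := inner_relation_deriv hΩ hp da dn hvn w
  have wn_v := inner_relation_deriv hΩ hp db dn hwn v
  have wn_w := inner_relation_deriv hΩ hp db dn hwn w
  have nn_v := inner_relation_deriv hΩ hp dn dn hnn v
  have nn_w := inner_relation_deriv hΩ hp dn dn hnn w
  simp only [fderiv_exp_two_mul dl, fderiv_fun_const, Pi.zero_apply,
    zero_apply] at vw_w vv_w ww_v ww_w vn_v vn_w wn_v wn_w nn_v nn_w
  have e1 := hexp p hp (d2 Φ w w p) (fderiv ℝ n p v)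
  have e2 := hexp p hp (d2 Φ v w p) (fderiv ℝ n p w)
  rw [fderiv_inner_apply ℝ dww dn, fderiv_inner_apply ℝ dvw dn, third]
  change ⟪_, d2 Φ w w p⟫ + ⟪d2 Φ w v p, _⟫ = _ at vw_w
  change ⟪_, d2 Φ w v p⟫ + ⟪d2 Φ w v p, _⟫ = _ at vv_w
  change ⟪_, d2 Φ v w p⟫ + ⟪d2 Φ v w p, _⟫ = _ at ww_v
  change ⟪_, d2 Φ w w p⟫ + ⟪d2 Φ w w p, _⟫ = _ at ww_w
  change _ + ⟪d2 Φ v v p, _⟫ = _ at vn_v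
  change _ + ⟪d2 Φ w v p, _⟫ = _ at vn_w
  change _ + ⟪d2 Φ v w p, _⟫ = _ at wn_v
  change _ + ⟪d2 Φ w w p, _⟫ = _ at wn_w
  rw [hsymm] at vw_w vv_w vn_w
  rw [real_inner_comm] at vw_w vv_w ww_v ww_w vn_v vn_w wn_v wn_w nn_v nn_w
  -- Tangential components of the second derivatives of `Φ`.
  have vw_v' : ⟪d2 Φ v w p, fderiv ℝ Φ p v⟫ = Real.exp (2 * lam p) * fderiv ℝ lam p w := by
    linarith
  have vw_w' : ⟪d2 Φ v w p, fderiv ℝ Φ p w⟫ = Real.exp (2 * lam p) * fderiv ℝ lam p v := by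
    linarith
  have ww_w' : ⟪d2 Φ w w p, fderiv ℝ Φ p w⟫ = Real.exp (2 * lam p) * fderiv ℝ lam p w := by
    linarith
  have ww_v' : ⟪d2 Φ w w p, fderiv ℝ Φ p v⟫ = -(Real.exp (2 * lam p) * fderiv ℝ lam p v) := by
    linarith
  -- Components of the derivatives of the unit normal.
  have nv_v : ⟪fderiv ℝ n p v, fderiv ℝ Φ p v⟫ = -⟪d2 Φ v v p, n p⟫ := by linarith
  have nv_w : ⟪fderiv ℝ n p v, fderiv ℝ Φ p w⟫ = -⟪d2 Φ v w p, n p⟫ := by linarith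
  have nw_v : ⟪fderiv ℝ n p w, fderiv ℝ Φ p v⟫ = -⟪d2 Φ v w p, n p⟫ := by linarith
  have nw_w : ⟪fderiv ℝ n p w, fderiv ℝ Φ p w⟫ = -⟪d2 Φ w w p, n p⟫ := by linarith
  have nv_n : ⟪fderiv ℝ n p v, n p⟫ = 0 := by linarith
  have nw_n : ⟪fderiv ℝ n p w, n p⟫ = 0 := by linarith
  rw [ww_v', ww_w', nv_v, nv_w, nv_n] at e1
  rw [vw_v', vw_w', nw_v, nw_w, nw_n] at e2
  refine mul_left_cancel₀ (Real.exp_pos (2 * lam p)).ne' ?_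
  linear_combination e1 - e2

/-- The derivative of a mean curvature `e^{-2λ} (f + g) / 2`, rescaled by `e^{2λ}`. -/
lemma exp_mul_fderiv_half_sum {lam f g : R2 → ℝ} {p : R2} (hl : DifferentiableAt ℝ lam p)
    (hf : DifferentiableAt ℝ f p) (hg : DifferentiableAt ℝ g p) (v : R2) :
    Real.exp (2 * lam p) * fderiv ℝ (fun q => Real.exp (-(2 * lam q)) * (f q + g q) / 2) p v
      = (fderiv ℝ f p v + fderiv ℝ g p v) / 2 - fderiv ℝ lam p v * (f p + g p) := by
  have hE : Real.exp (2 * lam p) * Real.exp (-(2 * lam p)) = 1 := by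
    rw [← Real.exp_add]; simp
  have hd := ((((hl.hasFDerivAt.const_mul (2 : ℝ)).fun_neg.exp).mul
    (hf.hasFDerivAt.add hg.hasFDerivAt)).mul_const (2⁻¹ : ℝ))
  have : fderiv ℝ (fun q => Real.exp (-(2 * lam q)) * (f q + g q) / 2) p = _ := hd.fderiv
  rw [this]
  simp
  linear_combination ((fderiv ℝ f p v + fderiv ℝ g p v) / 2 - fderiv ℝ lam p v * (f p + g p)) * hE

/-- The Gauss–Codazzi equations in divergence form (identity `Gausscodazziformereelle`). -/
theorem gauss_codazzi (Φ : R2 → R3) (lam : R2 → ℝ)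
    (h : ConformalImmersion (disk 1) Φ lam) :
    ∀ p ∈ disk 1,
      Real.exp (2 * lam p) * pdx (meanCurv Φ lam) p
          = pdx (fun q => (sff Φ ex ex q - sff Φ ey ey q) / 2) p
            + pdy (fun q => sff Φ ex ey q) p ∧
      Real.exp (2 * lam p) * pdy (meanCurv Φ lam) p
          = -pdy (fun q => (sff Φ ex ex q - sff Φ ey ey q) / 2) p
            + pdx (fun q => sff Φ ex ey q) p := by
  intro p hp
  have hΩ : IsOpen (disk 1) := Metric.isOpen_ball
  have hΦ := h.smooth
  have hΦx : ContDiffOn ℝ (⊤ : ℕ∞) (pdx Φ) (disk 1) := contDiffOn_dir hΩ hΦ ex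
  have hΦy : ContDiffOn ℝ (⊤ : ℕ∞) (pdy Φ) (disk 1) := contDiffOn_dir hΩ hΦ ey
  have hsq : ∀ q, Real.exp (lam q) ^ 2 = Real.exp (2 * lam q) := fun q => by
    rw [← Real.exp_nat_mul]; norm_num
  have hxy : ∀ q ∈ disk 1, ⟪fderiv ℝ Φ q ex, fderiv ℝ Φ q ey⟫ = 0 := h.orth
  have hxx : ∀ q ∈ disk 1, ⟪fderiv ℝ Φ q ex, fderiv ℝ Φ q ex⟫ = Real.exp (2 * lam q) :=
    fun q hq => by
      rw [real_inner_self_eq_norm_sq, ← hsq, ← h.norm_x q hq]; rfl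
  have hyy : ∀ q ∈ disk 1, ⟪fderiv ℝ Φ q ey, fderiv ℝ Φ q ey⟫ = Real.exp (2 * lam q) :=
    fun q hq => by
      rw [real_inner_self_eq_norm_sq, ← hsq, ← h.norm_y q hq]; rfl
  have hcn : ∀ q ∈ disk 1, ‖cross (pdx Φ q) (pdy Φ q)‖ = Real.exp (2 * lam q) := fun q hq => by
    rw [← sq_eq_sq₀ (norm_nonneg _) (Real.exp_pos _).le, ← real_inner_self_eq_norm_sq,
      inner_cross_cross_self]
    have h1 := hxx q hq
    have h2 := hyy q hq
    have h3 := hxy q hq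
    change ⟪pdx Φ q, pdx Φ q⟫ = _ at h1
    change ⟪pdy Φ q, pdy Φ q⟫ = _ at h2
    change ⟪pdx Φ q, pdy Φ q⟫ = _ at h3
    rw [h1, h2, h3]; ring
  have hc := contDiffOn_cross hΦx hΦy
  have hn : ContDiffOn ℝ (⊤ : ℕ∞) (gaussMap Φ) (disk 1) := by
    have hne : ∀ q ∈ disk 1, cross (pdx Φ q) (pdy Φ q) ≠ 0 := fun q hq h0 => by
      have := hcn q hq
      rw [h0, norm_zero] at this
      exact (Real.exp_pos _).ne this
    exact ((hc.norm ℝ hne).inv fun q hq => norm_ne_zero_iff.2 (hne q hq)).smul hc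
  have hxn : ∀ q ∈ disk 1, ⟪fderiv ℝ Φ q ex, gaussMap Φ q⟫ = 0 := fun q _ => by
    rw [gaussMap, real_inner_smul_right]
    exact mul_eq_zero_of_right _ (inner_cross_left _ _)
  have hyn : ∀ q ∈ disk 1, ⟪fderiv ℝ Φ q ey, gaussMap Φ q⟫ = 0 := fun q _ => by
    rw [gaussMap, real_inner_smul_right]
    exact mul_eq_zero_of_right _ (inner_cross_right _ _)
  have hnn : ∀ q ∈ disk 1, ⟪gaussMap Φ q, gaussMap Φ q⟫ = 1 := fun q hq => by
    have hE := (Real.exp_pos (2 * lam q)).ne'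
    rw [gaussMap, real_inner_smul_right, real_inner_smul_left, real_inner_self_eq_norm_sq,
      hcn q hq]
    field_simp
  have hexp : ∀ q ∈ disk 1, ∀ u z : R3, Real.exp (2 * lam q) * ⟪u, z⟫
      = ⟪u, fderiv ℝ Φ q ex⟫ * ⟪z, fderiv ℝ Φ q ex⟫ + ⟪u, fderiv ℝ Φ q ey⟫ * ⟪z, fderiv ℝ Φ q ey⟫
        + Real.exp (2 * lam q) * ⟪u, gaussMap Φ q⟫ * ⟪z, gaussMap Φ q⟫ := fun q hq u z => by
    have hE := (Real.exp_pos (2 * lam q)).ne'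
    have hg := inner_cross_inner_cross u z (fderiv ℝ Φ q ex) (fderiv ℝ Φ q ey)
    rw [hxx q hq, hyy q hq, hxy q hq] at hg
    rw [gaussMap, real_inner_smul_right, real_inner_smul_right, hcn q hq]
    change _ = _ + _ * (_ * ⟪u, cross (fderiv ℝ Φ q ex) (fderiv ℝ Φ q ey)⟫)
      * (_ * ⟪z, cross (fderiv ℝ Φ q ex) (fderiv ℝ Φ q ey)⟫)
    field_simp
    linear_combination -hg
  have codx := codazzi_direction hΩ hΦ h.smooth_lam hn hxy hxx hyy hxn hyn hnn hexp hp
  have cody := codazzi_direction hΩ hΦ h.smooth_lam hn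
    (fun q hq => (real_inner_comm _ _).trans (hxy q hq)) hyy hxx hyn hxn hnn
    (fun q hq u z => (hexp q hq u z).trans (by ring)) hp
  have hsff : ∀ v w, DifferentiableAt ℝ (sff Φ v w) p := fun v w =>
    (differentiableAt_of_contDiffOn hΩ (contDiffOn_dir hΩ (contDiffOn_dir hΩ hΦ w) v) hp).inner ℝ
      (differentiableAt_of_contDiffOn hΩ hn hp)
  have hcomm : sff Φ ey ex =ᶠ[nhds p] sff Φ ex ey :=
    Filter.eventually_of_mem (hΩ.mem_nhds hp) fun q hq => by
      simp only [sff, d2_comm hΩ hΦ ey ex hq]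
  have hdiff : ∀ v, fderiv ℝ (fun q => (sff Φ ex ex q - sff Φ ey ey q) / 2) p v
      = (fderiv ℝ (sff Φ ex ex) p v - fderiv ℝ (sff Φ ey ey) p v) / 2 := fun v => by
    have hd := ((hsff ex ex).hasFDerivAt.sub (hsff ey ey).hasFDerivAt).mul_const (2⁻¹ : ℝ)
    have : fderiv ℝ (fun q => (sff Φ ex ex q - sff Φ ey ey q) / 2) p = _ := hd.fderiv
    rw [this]
    simp
    ring
  have hH := exp_mul_fderiv_half_sum (differentiableAt_of_contDiffOn hΩ h.smooth_lam hp)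
    (hsff ex ex) (hsff ey ey)
  change fderiv ℝ (sff Φ ey ey) p ex - fderiv ℝ (sff Φ ex ey) p ey
    = fderiv ℝ lam p ex * (sff Φ ex ex p + sff Φ ey ey p) at codx
  change fderiv ℝ (sff Φ ex ex) p ey - fderiv ℝ (sff Φ ey ex) p ex
    = fderiv ℝ lam p ey * (sff Φ ey ey p + sff Φ ex ex p) at cody
  rw [hcomm.fderiv_eq] at cody
  constructor
  · refine (hH ex).trans ?_
    change _ = fderiv ℝ (fun q => (sff Φ ex ex q - sff Φ ey ey q) / 2) p ex
      + fderiv ℝ (sff Φ ex ey) p ey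
    rw [hdiff]
    linear_combination codx
  · refine (hH ey).trans ?_
    change _ = -fderiv ℝ (fun q => (sff Φ ex ex q - sff Φ ey ey q) / 2) p ey
      + fderiv ℝ (sff Φ ex ey) p ex
    rw [hdiff]
    linear_combination cody

end
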